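/- Let f : X → Y be a continuous map between locally finite topological spaces, let y ∈ Y, and let x ∈ X be a point such that f(x) lies in the path component of y. Then the set S of path components z ∈ π₀(F_y(f)) with π₀(i)(z) = [x] is finite, and for any choice of representative points z̃ of the components z ∈ S one has ∑_{z ∈ S} μ(F_y(f), z̃) = μ(X,x)·μ(Y,y)^{-1} in ℚ. -/

import Mathlib

open scoped unitInterval

/-- The homotopy fiber of `f : X → Y` at `y : Y`: pairs `(x, p)` with `p` a path
from `f x` to `y`, topologized as a subspace of `X × C(I, Y)`. -/
abbrev HomotopyFiber {X Y : Type*} [TopologicalSpace X] [TopologicalSpace Y]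
    (f : X → Y) (y : Y) : Type _ :=
  {p : X × C(I, Y) // p.2 0 = f p.1 ∧ p.2 1 = y}

/-- The projection `i : F_y(f) → X`, `(x, p) ↦ x`. -/
def fiberIncl {X Y : Type*} [TopologicalSpace X] [TopologicalSpace Y]
    (f : X → Y) (y : Y) : HomotopyFiber f y → X :=
  fun p => p.1.1

/-- A space is locally finite if all its homotopy groups `π_n`, `n ≥ 1`, at all base
points are finite, and at each base point all but finitely many of them are trivial. -/
def IsLocallyFinite (X : Type*) [TopologicalSpace X] : Prop :=
  ∀ x : X, (∀ n : ℕ, 1 ≤ n → Finite (HomotopyGroup (Fin n) X x)) ∧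
    ∃ N : ℕ, ∀ n : ℕ, N < n → Subsingleton (HomotopyGroup (Fin n) X x)

/-- `μ(X, x) = ∏_{n ≥ 1} |π_n(X, x)|^{(-1)^n}`. -/
noncomputable def mu (X : Type*) [TopologicalSpace X] (x : X) : ℚ :=
  ∏ᶠ n : ℕ, (Nat.card (HomotopyGroup (Fin (n + 1)) X x) : ℚ) ^ ((-1 : ℤ) ^ (n + 1))

/-- The path component of a point, as an element of `π₀(X)`. -/
def toPi0 {X : Type*} [TopologicalSpace X] (x : X) : ZerothHomotopy X :=
  Quotient.mk (pathSetoid X) x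

/-- The map `π₀(f) : π₀(X) → π₀(Y)` induced by a continuous map. -/
def pi0Map {X Y : Type*} [TopologicalSpace X] [TopologicalSpace Y] {f : X → Y}
    (hf : Continuous f) : ZerothHomotopy X → ZerothHomotopy Y :=
  Quot.map f (fun _ _ h => ⟨h.somePath.map hf⟩)


/-- The projection of the homotopy fiber to `X` is continuous. -/
theorem continuous_fiberIncl {X Y : Type*} [TopologicalSpace X] [TopologicalSpace Y]
    (f : X → Y) (y : Y) : Continuous (fiberIncl f y) :=
  continuous_subtype_val.fst



namespace HF

open Set

/-- The part of the boundary of the cube given by the bottom and the sides. -/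
def J (n : ℕ) : Set ((Fin n → I) × I) := {q | q.1 ∈ Cube.boundary (Fin n) ∨ q.2 = 0}

lemma isClosed_boundary (n : ℕ) : IsClosed (Cube.boundary (Fin n)) := by
  have : Cube.boundary (Fin n) = ⋃ i : Fin n, ({y | y i = 0} ∪ {y | y i = 1}) := by
    ext y; simp [Cube.boundary]
  rw [this]
  refine isClosed_iUnion_of_finite fun i => ?_
  exact (isClosed_eq (continuous_apply i) continuous_const).union
    (isClosed_eq (continuous_apply i) continuous_const)

lemma isClosed_J (n : ℕ) : IsClosed (J n) := by
  have : J n = (Prod.fst ⁻¹' Cube.boundary (Fin n)) ∪ {q | q.2 = 0} := rfl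
  rw [this]
  exact ((isClosed_boundary n).preimage continuous_fst).union
    (isClosed_eq continuous_snd continuous_const)

lemma boundary_succ {n : ℕ} (t : Fin (n + 1) → I) :
    t ∈ Cube.boundary (Fin (n + 1)) ↔
      (t 0 = 0 ∨ t 0 = 1) ∨ Fin.tail t ∈ Cube.boundary (Fin n) := by
  constructor
  · rintro ⟨i, hi⟩
    refine Fin.cases (fun h => Or.inl h) (fun j h => Or.inr ⟨j, h⟩) i hi
  · rintro (h | ⟨j, h⟩)
    · exact ⟨0, h⟩
    · exact ⟨j.succ, h⟩

lemma continuous_tail {n : ℕ} : Continuous (fun t : Fin (n + 1) → I => (Fin.tail t : Fin n → I)) :=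
  continuous_pi fun i => continuous_apply i.succ

lemma continuous_cons {n : ℕ} :
    Continuous (fun q : I × (Fin n → I) => (Fin.cons q.1 q.2 : Fin (n + 1) → I)) := by
  refine continuous_pi fun i => ?_
  refine Fin.cases ?_ (fun j => ?_) i
  · simpa using continuous_fst
  · simpa [Function.comp_def] using (continuous_apply j).comp continuous_snd

lemma exists_retr (n : ℕ) : ∃ r : C((Fin n → I) × I, (Fin n → I) × I),
    (∀ q, r q ∈ J n) ∧ ∀ q ∈ J n, r q = q := by
  let v : (Fin n → I) × I → (Fin n → ℝ) := fun q i => 2 * (q.1 i : ℝ) - 1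
  let D : (Fin n → I) × I → ℝ := fun q => max ((2 - (q.2 : ℝ)) / 2) ‖v q‖
  have hv : Continuous v := by fun_prop
  have hD : Continuous D := by fun_prop
  have hDpos : ∀ q, 0 < D q := fun q => by
    have := q.2.2.2
    exact lt_of_lt_of_le (by linarith) (le_max_left _ _)
  have hv1 : ∀ q, ‖v q‖ ≤ 1 := fun q => by
    rw [pi_norm_le_iff_of_nonneg zero_le_one]
    intro i
    have h1 := (q.1 i).2.1
    have h2 := (q.1 i).2.2
    rw [Real.norm_eq_abs, abs_le]
    constructor <;> simp only [v] <;> linarith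
  let r : (Fin n → I) × I → (Fin n → I) × I := fun q =>
    (fun i => Set.projIcc 0 1 zero_le_one ((1 + v q i / D q) / 2),
      Set.projIcc 0 1 zero_le_one (2 - (2 - (q.2 : ℝ)) / D q))
  have hr : Continuous r := by
    refine Continuous.prodMk (continuous_pi fun i => ?_) ?_
    · refine continuous_projIcc.comp (Continuous.div_const (continuous_const.add
        (Continuous.div ((continuous_apply i).comp hv) hD fun q => (hDpos q).ne')) _)
    · refine continuous_projIcc.comp (continuous_const.sub
        (Continuous.div (by fun_prop) hD fun q => (hDpos q).ne'))
  refine ⟨⟨r, hr⟩, fun q => ?_, fun q hq => ?_⟩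
  · rcases le_total ‖v q‖ ((2 - (q.2 : ℝ)) / 2) with h | h
    · right
      have hDq : D q = (2 - (q.2 : ℝ)) / 2 := max_eq_left h
      have h2 := q.2.2.2
      have : 2 - (2 - (q.2 : ℝ)) / D q = 0 := by
        rw [hDq]
        have : (2 - (q.2 : ℝ)) ≠ 0 := by linarith
        field_simp
        ring
      change Set.projIcc 0 1 zero_le_one (2 - (2 - (q.2 : ℝ)) / D q) = 0
      rw [this]
      exact Set.projIcc_left _
    · left
      have hDq : D q = ‖v q‖ := max_eq_right h
      have hpos := hDpos q
      rw [hDq] at hpos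
      obtain ⟨i, hi⟩ : ∃ i, ‖v q‖ ≤ ‖v q i‖ := by
        by_contra! hcon
        exact absurd ((pi_norm_lt_iff hpos).2 hcon) (lt_irrefl _)
      have hi' : |v q i| = ‖v q‖ := le_antisymm (norm_le_pi_norm (v q) i) hi
      refine ⟨i, ?_⟩
      change Set.projIcc 0 1 zero_le_one ((1 + v q i / D q) / 2) = 0 ∨
        Set.projIcc 0 1 zero_le_one ((1 + v q i / D q) / 2) = 1
      rcases abs_cases (v q i) with ⟨h1, -⟩ | ⟨h1, -⟩
      · right
        have : (1 + v q i / D q) / 2 = 1 := by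
          rw [hDq, ← hi', h1, div_self (by rw [← h1, hi']; exact hpos.ne')]; norm_num
        rw [this]; exact Set.projIcc_right _
      · left
        have : (1 + v q i / D q) / 2 = 0 := by
          rw [hDq, ← hi', h1, div_neg, div_self (by
            intro h0; rw [← hi', h0] at hpos; simp at hpos)]
          norm_num
        rw [this]; exact Set.projIcc_left _
  · have hD1 : D q = 1 := by
      rcases hq with ⟨i, hi⟩ | h0
      · have hle : 1 ≤ ‖v q‖ := by
          refine le_trans ?_ (norm_le_pi_norm (v q) i)
          rcases hi with hi | hi <;> simp [v, hi]
          norm_num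
        have : ‖v q‖ = 1 := le_antisymm (hv1 q) hle
        have h2 := q.2.2.1
        simp only [D, this]
        exact max_eq_right (by linarith)
      · simp only [D, h0]
        simp [hv1 q]
    change r q = q
    refine Prod.ext (funext fun i => ?_) ?_
    · change Set.projIcc 0 1 zero_le_one ((1 + v q i / D q) / 2) = q.1 i
      rw [hD1, show (1 + v q i / 1) / 2 = (q.1 i : ℝ) by simp [v]]
      exact Set.projIcc_val _ _
    · change Set.projIcc 0 1 zero_le_one (2 - (2 - (q.2 : ℝ)) / D q) = q.2
      rw [hD1, show 2 - (2 - (q.2 : ℝ)) / 1 = (q.2 : ℝ) by simp]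
      exact Set.projIcc_val _ _

lemma fill {Y : Type*} [TopologicalSpace Y] {n : ℕ} (h : (Fin n → I) × I → Y)
    (hc : ContinuousOn h (J n)) : ∃ H : C((Fin n → I) × I, Y), ∀ q ∈ J n, H q = h q := by
  obtain ⟨r, hr1, hr2⟩ := exists_retr n
  exact ⟨⟨fun q => h (r q), hc.comp_continuous r.continuous hr1⟩,
    fun q hq => congrArg h (hr2 q hq)⟩

/-- Relative homotopy lifting for cubes. -/
def IsFib {E B : Type*} [TopologicalSpace E] [TopologicalSpace B] (p : E → B) : Prop :=
  ∀ (n : ℕ) (g : C((Fin n → I) × I, B)) (h : (Fin n → I) × I → E), ContinuousOn h (J n) →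
    (∀ q ∈ J n, p (h q) = g q) →
    ∃ H : C((Fin n → I) × I, E), (∀ q, p (H q) = g q) ∧ ∀ q ∈ J n, H q = h q

/-- Lifting against boundary inclusions of cubes. -/
def IsTriv {E B : Type*} [TopologicalSpace E] [TopologicalSpace B] (p : E → B) : Prop :=
  ∀ (n : ℕ) (g : C(Fin n → I, B)) (h : (Fin n → I) → E),
    ContinuousOn h (Cube.boundary (Fin n)) →
    (∀ t ∈ Cube.boundary (Fin n), p (h t) = g t) →
    ∃ H : C(Fin n → I, E), (∀ t, p (H t) = g t) ∧ ∀ t ∈ Cube.boundary (Fin n), H t = h t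

/-- The path fibration associated with `f`. -/
abbrev PathSp {X Y : Type*} [TopologicalSpace X] [TopologicalSpace Y] (f : X → Y) : Type _ :=
  {p : X × C(I, Y) // p.2 0 = f p.1}

lemma isTriv_fst {X Y : Type*} [TopologicalSpace X] [TopologicalSpace Y] {f : X → Y}
    (hf : Continuous f) : IsTriv (fun e : PathSp f => e.1.1) := by
  classical
  intro n g h hc hg
  let k : (Fin n → I) × I → Y := fun q =>
    if q.1 ∈ Cube.boundary (Fin n) then (h q.1).1.2 q.2 else f (g q.1)
  have hk : ContinuousOn k (J n) := by
    have e : J n = (Prod.fst ⁻¹' Cube.boundary (Fin n)) ∪ {q | q.2 = 0} := rfl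
    rw [e]
    refine ContinuousOn.union_of_isClosed ?_ ?_ ((isClosed_boundary n).preimage continuous_fst)
      (isClosed_eq continuous_snd continuous_const)
    · have : ContinuousOn (fun q : (Fin n → I) × I => (h q.1).1.2 q.2)
          (Prod.fst ⁻¹' Cube.boundary (Fin n)) := by
        have h1 : ContinuousOn (fun q : (Fin n → I) × I => (h q.1).1.2)
            (Prod.fst ⁻¹' Cube.boundary (Fin n)) :=
          (continuous_snd.comp continuous_subtype_val).comp_continuousOn
            (hc.comp continuous_fst.continuousOn fun _ h => h)
        exact continuous_eval.comp_continuousOn (h1.prodMk continuous_snd.continuousOn)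
      exact this.congr fun q hq => if_pos hq
    · have : ContinuousOn (fun q : (Fin n → I) × I => f (g q.1)) {q | q.2 = 0} := by fun_prop
      refine this.congr fun q hq => ?_
      by_cases hb : q.1 ∈ Cube.boundary (Fin n)
      · have h0 : q.2 = 0 := hq
        simp only [k, if_pos hb, h0, (h q.1).2]
        exact congrArg f (hg _ hb)
      · simp only [k, if_neg hb]
  obtain ⟨K, hK⟩ := fill k hk
  refine ⟨⟨fun t => ⟨(g t, K.curry t), ?_⟩, ?_⟩, fun t => rfl, fun t ht => ?_⟩
  · change K (t, 0) = f (g t)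
    rw [hK (t, 0) (Or.inr rfl)]
    by_cases hb : t ∈ Cube.boundary (Fin n)
    · simp only [k, if_pos hb, (h t).2]
      exact congrArg f (hg _ hb)
    · simp only [k, if_neg hb]
  · exact (g.continuous.prodMk K.curry.continuous).subtype_mk _
  · refine Subtype.ext (Prod.ext (hg t ht).symm ?_)
    ext s
    change K (t, s) = _
    rw [hK (t, s) (Or.inl ht)]
    simp only [k, if_pos ht]

lemma isFib_ev {X Y : Type*} [TopologicalSpace X] [TopologicalSpace Y] {f : X → Y}
    (hf : Continuous f) : IsFib (fun e : PathSp f => e.1.2 1) := by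
  classical
  intro n g h hc hg
  have hX : ContinuousOn (fun q => (h q).1.1) (J n) :=
    (continuous_fst.comp continuous_subtype_val).comp_continuousOn hc
  obtain ⟨A, hA⟩ := fill _ hX
  let pr : (Fin (n + 1) → I) × I → (Fin n → I) × I := fun q => (Fin.tail q.1, q.2)
  have hpr : Continuous pr := (continuous_tail.comp continuous_fst).prodMk continuous_snd
  have hs : Continuous (fun q : (Fin (n + 1) → I) × I => q.1 0) := by fun_prop
  let k : (Fin (n + 1) → I) × I → Y := fun q =>
    if pr q ∈ J n then (h (pr q)).1.2 (q.1 0) else if q.1 0 = 0 then f (A (pr q)) else g (pr q)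
  have k1 : ∀ q, pr q ∈ J n → k q = (h (pr q)).1.2 (q.1 0) := fun q hq => if_pos hq
  have k2 : ∀ q, q.1 0 = 0 → k q = f (A (pr q)) := fun q hq => by
    by_cases hb : pr q ∈ J n
    · rw [k1 q hb, hq, (h (pr q)).2, hA _ hb]
    · simp only [k, if_neg hb, if_pos hq]
  have k3 : ∀ q, q.1 0 = 1 → k q = g (pr q) := fun q hq => by
    by_cases hb : pr q ∈ J n
    · rw [k1 q hb, hq]; exact hg _ hb
    · simp only [k, if_neg hb, hq]; simp
  have hk : ContinuousOn k (J (n + 1)) := by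
    have e : J (n + 1) = pr ⁻¹' (J n) ∪ ({q | q.1 0 = 0} ∪ {q | q.1 0 = 1}) := by
      ext q
      simp only [J, mem_ofPred_eq, boundary_succ, pr, mem_union, mem_preimage]
      tauto
    rw [e]
    refine ContinuousOn.union_of_isClosed ?_ (ContinuousOn.union_of_isClosed ?_ ?_ ?_ ?_)
      ((isClosed_J n).preimage hpr) (IsClosed.union ?_ ?_)
    · have h1 : ContinuousOn (fun q => (h (pr q)).1.2) (pr ⁻¹' (J n)) :=
        (continuous_snd.comp continuous_subtype_val).comp_continuousOn
          (hc.comp hpr.continuousOn fun _ h => h)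
      exact (continuous_eval.comp_continuousOn (h1.prodMk hs.continuousOn)).congr k1
    · exact (hf.comp (A.continuous.comp hpr)).continuousOn.congr k2
    · exact (g.continuous.comp hpr).continuousOn.congr k3
    all_goals exact isClosed_eq hs continuous_const
  obtain ⟨K, hK⟩ := fill k hk
  let K' : C((Fin n → I) × I, C(I, Y)) := ContinuousMap.curry
    ⟨fun w : ((Fin n → I) × I) × I => K (Fin.cons w.2 w.1.1, w.1.2),
      K.continuous.comp ((continuous_cons.comp (continuous_snd.prodMk
        (continuous_fst.comp continuous_fst))).prodMk (continuous_snd.comp continuous_fst))⟩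
  have hK' : ∀ w s, K' w s = K (Fin.cons s w.1, w.2) := fun w s => rfl
  have hA0 : ∀ w, K' w 0 = f (A w) := fun w => by
    rw [hK', hK _ (Or.inl ((boundary_succ _).2 (Or.inl (Or.inl rfl)))), k2 _ rfl]
    rfl
  refine ⟨⟨fun w => ⟨(A w, K' w), hA0 w⟩, (A.continuous.prodMk K'.continuous).subtype_mk _⟩,
    fun w => ?_, fun w hw => ?_⟩
  · change K' w 1 = g w
    rw [hK', hK _ (Or.inl ((boundary_succ _).2 (Or.inl (Or.inr rfl)))), k3 _ rfl]
    rfl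
  · refine Subtype.ext (Prod.ext (hA w hw) ?_)
    ext s
    change K' w s = _
    have hw' : pr (Fin.cons s w.1, w.2) ∈ J n := hw
    rw [hK', hK, k1 _ hw']
    · rfl
    · rcases hw with hw | hw
      · exact Or.inl ((boundary_succ _).2 (Or.inr hw))
      · exact Or.inr hw

end HF


namespace HF

open Set

section Triv

variable {E B : Type*} [TopologicalSpace E] [TopologicalSpace B]

/-- The map induced on generalized loops. -/
def genMap {p : E → B} (hp : Continuous p) (n : ℕ) (e : E) (a : GenLoop (Fin n) E e) :
    GenLoop (Fin n) B (p e) :=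
  ⟨(⟨p, hp⟩ : C(E, B)).comp a.1, fun y hy => congrArg p (a.2 y hy)⟩

/-- The map induced on homotopy groups. -/
def piMap {p : E → B} (hp : Continuous p) (n : ℕ) (e : E) :
    HomotopyGroup (Fin n) E e → HomotopyGroup (Fin n) B (p e) :=
  Quotient.map (genMap hp n e) (by
    rintro a b ⟨H⟩
    exact ⟨H.compContinuousMap ⟨p, hp⟩⟩)

lemma IsTriv.piMap_bijective {p : E → B} (hp : Continuous p) (h : IsTriv p) (n : ℕ) (e : E) :
    Function.Bijective (piMap hp n e) := by
  classical
  constructor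
  · intro a b
    refine Quotient.inductionOn₂ a b fun a a' hab => ?_
    obtain ⟨H⟩ : GenLoop.Homotopic (genMap hp n e a) (genMap hp n e a') := Quotient.exact hab
    apply Quotient.sound
    let g : C(Fin (n + 1) → I, B) := ⟨fun t => H (t 0, Fin.tail t),
      H.continuous.comp ((continuous_apply 0).prodMk continuous_tail)⟩
    let k : (Fin (n + 1) → I) → E := fun t =>
      if t 0 = 0 then a (Fin.tail t) else if t 0 = 1 then a' (Fin.tail t) else e
    have k1 : ∀ t, t 0 = 0 → k t = a (Fin.tail t) := fun t ht => if_pos ht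
    have k2 : ∀ t, t 0 = 1 → k t = a' (Fin.tail t) := fun t ht => by simp [k, ht]
    have k3 : ∀ t : Fin (n + 1) → I, (Fin.tail t : Fin n → I) ∈ Cube.boundary (Fin n) → k t = e := fun t ht => by
      simp only [k]
      split_ifs
      · exact a.2 _ ht
      · exact a'.2 _ ht
      · rfl
    have hs : Continuous (fun t : Fin (n + 1) → I => t 0) := continuous_apply 0
    have e1 : Cube.boundary (Fin (n + 1)) = ({t | t 0 = 0} ∪ {t | t 0 = 1}) ∪
        Fin.tail ⁻¹' Cube.boundary (Fin n) := by
      ext t; exact boundary_succ t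
    have c0 : IsClosed {t : Fin (n + 1) → I | t 0 = 0} := isClosed_eq hs continuous_const
    have c1 : IsClosed {t : Fin (n + 1) → I | t 0 = 1} := isClosed_eq hs continuous_const
    obtain ⟨K, hK1, hK2⟩ := h (n + 1) g k (by
      rw [e1]
      refine ContinuousOn.union_of_isClosed (ContinuousOn.union_of_isClosed ?_ ?_ c0 c1) ?_
        (c0.union c1) ((isClosed_boundary n).preimage continuous_tail)
      · exact (a.1.continuous.comp continuous_tail).continuousOn.congr k1
      · exact (a'.1.continuous.comp continuous_tail).continuousOn.congr k2
      · exact (continuous_const (y := e)).continuousOn.congr k3) (by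
      intro t ht
      rcases (boundary_succ t).1 ht with (h0 | h0) | h0
      · rw [k1 t h0]
        change _ = H (t 0, Fin.tail t)
        rw [h0]; exact (H.apply_zero _).symm
      · rw [k2 t h0]
        change _ = H (t 0, Fin.tail t)
        rw [h0]; exact (H.apply_one _).symm
      · rw [k3 t h0]
        change _ = H (t 0, Fin.tail t)
        rw [H.eq_fst _ h0]
        exact (congrArg p (a.2 _ h0)).symm)
    refine ⟨⟨⟨⟨fun w => K (Fin.cons w.1 w.2), K.continuous.comp continuous_cons⟩,
      fun t => ?_, fun t => ?_⟩, fun u t ht => ?_⟩⟩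
    · change K (Fin.cons 0 t) = a t
      rw [hK2 _ ((boundary_succ _).2 (Or.inl (Or.inl rfl))), k1 _ rfl]; rfl
    · change K (Fin.cons 1 t) = a' t
      rw [hK2 _ ((boundary_succ _).2 (Or.inl (Or.inr rfl))), k2 _ rfl]; rfl
    · change K (Fin.cons u t) = a t
      have hb := (boundary_succ (Fin.cons u t : Fin (n + 1) → I)).2 (Or.inr ht)
      rw [hK2 _ hb, k3 (Fin.cons u t) ht]
      exact (a.2 _ ht).symm
  · intro b
    refine Quotient.inductionOn b fun b => ?_
    obtain ⟨K, hK1, hK2⟩ := h n b.1 (fun _ => e) continuousOn_const (fun t ht => (b.2 t ht).symm)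
    refine ⟨Quotient.mk _ ⟨K, hK2⟩, ?_⟩
    refine congrArg (Quotient.mk _) ?_
    ext t
    exact hK1 t

lemma IsTriv.card_eq {p : E → B} (hp : Continuous p) (h : IsTriv p) (n : ℕ) (e : E) :
    Nat.card (HomotopyGroup (Fin n) E e) = Nat.card (HomotopyGroup (Fin n) B (p e)) :=
  Nat.card_congr (Equiv.ofBijective _ (h.piMap_bijective hp n e))

lemma IsTriv.joined {p : E → B} (h : IsTriv p) {e e' : E}
    (hj : Joined (p e) (p e')) : Joined e e' := by
  classical
  obtain ⟨γ⟩ := hj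
  have hs : Continuous (fun t : Fin 1 → I => t 0) := continuous_apply 0
  have e1 : Cube.boundary (Fin 1) = ({t | t 0 = 0} ∪ {t | t 0 = 1}) := by
    ext t; simp [Cube.boundary]
  have c0 : IsClosed {t : Fin 1 → I | t 0 = 0} := isClosed_eq hs continuous_const
  have c1 : IsClosed {t : Fin 1 → I | t 0 = 1} := isClosed_eq hs continuous_const
  let k : (Fin 1 → I) → E := fun t => if t 0 = 0 then e else e'
  have k1 : ∀ t, t 0 = 0 → k t = e := fun t ht => if_pos ht
  have k2 : ∀ t, t 0 = 1 → k t = e' := fun t ht => by simp [k, ht]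
  obtain ⟨K, hK1, hK2⟩ := h 1 ⟨fun t => γ (t 0), γ.continuous.comp hs⟩ k (by
    rw [e1]
    exact ContinuousOn.union_of_isClosed ((continuous_const (y := e)).continuousOn.congr k1)
      ((continuous_const (y := e')).continuousOn.congr k2) c0 c1) (by
    intro t ht
    rw [e1] at ht
    rcases ht with ht | ht
    · rw [k1 t ht]
      change p e = γ (t 0)
      rw [show t 0 = 0 from ht, γ.source]
    · rw [k2 t ht]
      change p e' = γ (t 0)
      rw [show t 0 = 1 from ht, γ.target])
  refine ⟨⟨⟨fun s => K (fun _ => s), K.continuous.comp (by fun_prop)⟩, ?_, ?_⟩⟩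
  · change K (fun _ => 0) = e
    rw [hK2 _ ⟨0, Or.inl rfl⟩]; exact k1 (fun _ => 0) rfl
  · change K (fun _ => 1) = e'
    rw [hK2 _ ⟨0, Or.inr rfl⟩]; exact k2 (fun _ => 1) rfl

end Triv

/-- Reversal of paths. -/
def flip {X : Type*} [TopologicalSpace X] (e : PathSp (id : X → X)) : PathSp (id : X → X) :=
  ⟨(e.1.2 1, e.1.2.comp ⟨unitInterval.symm, unitInterval.continuous_symm⟩), by simp⟩

lemma flip_flip {X : Type*} [TopologicalSpace X] (e : PathSp (id : X → X)) :
    flip (flip e) = e := by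
  refine Subtype.ext (Prod.ext ?_ ?_)
  · have := e.2
    simpa [flip] using this
  · ext s
    simp [flip]

lemma continuous_flip {X : Type*} [TopologicalSpace X] :
    Continuous (flip : PathSp (id : X → X) → _) := by
  refine Continuous.subtype_mk (Continuous.prodMk ?_ ?_) _
  · exact (continuous_eval_const (1 : I)).comp (continuous_snd.comp continuous_subtype_val)
  · exact (ContinuousMap.continuous_precomp _).comp (continuous_snd.comp continuous_subtype_val)

lemma isTriv_flip {X : Type*} [TopologicalSpace X] :
    IsTriv (flip : PathSp (id : X → X) → _) := by
  intro n g h hc hg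
  refine ⟨⟨fun t => flip (g t), continuous_flip.comp g.continuous⟩, fun t => flip_flip _,
    fun t ht => ?_⟩
  change flip (g t) = h t
  rw [← hg t ht, flip_flip]

lemma card_eq_of_joined {X : Type*} [TopologicalSpace X] {x x' : X} (h : Joined x x') (n : ℕ) :
    Nat.card (HomotopyGroup (Fin n) X x) = Nat.card (HomotopyGroup (Fin n) X x') := by
  obtain ⟨γ⟩ := h
  let e : PathSp (id : X → X) := ⟨(x, γ.toContinuousMap), γ.source⟩
  have hfst : Continuous (fun e : PathSp (id : X → X) => e.1.1) :=
    continuous_fst.comp continuous_subtype_val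
  have h1 := (isTriv_fst (X := X) continuous_id).card_eq hfst n e
  have h2 := (isTriv_fst (X := X) continuous_id).card_eq hfst n (flip e)
  have h3 := (isTriv_flip (X := X)).card_eq continuous_flip n e
  have h4 : (flip e).1.1 = x' := γ.target
  rw [h4] at h2
  exact h1.symm.trans (h3.trans h2)

section Loop

variable {X : Type*} [TopologicalSpace X] {x : X}

/-- Currying of generalized loops. -/
def curryLoop (n : ℕ) : GenLoop (Fin (n + 1)) X x ≃ GenLoop (Fin n) (Path x x) (Path.refl x) where
  toFun a := ⟨⟨fun t =>
      { toFun := fun s => a (Fin.cons s t)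
        continuous_toFun := a.1.continuous.comp
          (continuous_cons.comp (continuous_id.prodMk continuous_const))
        source' := a.2 _ ((boundary_succ _).2 (Or.inl (Or.inl rfl)))
        target' := a.2 _ ((boundary_succ _).2 (Or.inl (Or.inr rfl))) },
      Path.continuous_uncurry_iff.1 (a.1.continuous.comp
          (continuous_cons.comp (continuous_snd.prodMk continuous_fst)))⟩,
    fun t ht => by
      ext s
      exact a.2 _ ((boundary_succ _).2 (Or.inr ht))⟩
  invFun b := ⟨⟨fun t => b (Fin.tail t) (t 0),
      continuous_eval.comp ((b.1.continuous.comp continuous_tail).prodMk (continuous_apply 0))⟩,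
    fun t ht => by
      change b (Fin.tail t) (t 0) = x
      rcases (boundary_succ t).1 ht with (h | h) | h
      · rw [h]; exact (b _).source
      · rw [h]; exact (b _).target
      · rw [show b (Fin.tail t) = Path.refl x from b.2 _ h]; rfl⟩
  left_inv a := by
    ext t
    change a (Fin.cons (t 0) (Fin.tail t)) = a t
    rw [Fin.cons_self_tail]
  right_inv b := by
    ext t s
    rfl

lemma curryLoop_homotopic {n : ℕ} {a b : GenLoop (Fin (n + 1)) X x} :
    GenLoop.Homotopic a b ↔ GenLoop.Homotopic (curryLoop n a) (curryLoop n b) := by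
  constructor
  · rintro ⟨H⟩
    refine ⟨⟨⟨⟨fun w =>
      { toFun := fun s => H (w.1, Fin.cons s w.2)
        continuous_toFun := H.continuous.comp (continuous_const.prodMk
          (continuous_cons.comp (continuous_id.prodMk continuous_const)))
        source' := (H.eq_fst _ ((boundary_succ _).2 (Or.inl (Or.inl rfl)))).trans
          (a.2 _ ((boundary_succ _).2 (Or.inl (Or.inl rfl))))
        target' := (H.eq_fst _ ((boundary_succ _).2 (Or.inl (Or.inr rfl)))).trans
          (a.2 _ ((boundary_succ _).2 (Or.inl (Or.inr rfl)))) },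
      Path.continuous_uncurry_iff.1 (H.continuous.comp
        ((continuous_fst.comp continuous_fst).prodMk (continuous_cons.comp
          (continuous_snd.prodMk (continuous_snd.comp continuous_fst)))))⟩, ?_, ?_⟩, ?_⟩⟩
    · intro t
      ext s
      exact H.apply_zero _
    · intro t
      ext s
      exact H.apply_one _
    · intro u t ht
      ext s
      exact H.eq_fst _ ((boundary_succ _).2 (Or.inr ht))
  · rintro ⟨H⟩
    refine ⟨⟨⟨⟨fun w => H (w.1, Fin.tail w.2) (w.2 0), ?_⟩, ?_, ?_⟩, ?_⟩⟩
    · exact continuous_eval.comp ((H.continuous.comp (continuous_fst.prodMk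
        (continuous_tail.comp continuous_snd))).prodMk ((continuous_apply 0).comp continuous_snd))
    · intro t
      change H (0, Fin.tail t) (t 0) = a t
      rw [H.apply_zero]
      exact congrArg (fun c : GenLoop _ _ _ => c t) ((curryLoop n).left_inv a)
    · intro t
      change H (1, Fin.tail t) (t 0) = b t
      rw [H.apply_one]
      exact congrArg (fun c : GenLoop _ _ _ => c t) ((curryLoop n).left_inv b)
    · intro u t ht
      change H (u, Fin.tail t) (t 0) = a t
      rw [show a t = x from a.2 t ht]
      rcases (boundary_succ t).1 ht with (h | h) | h
      · rw [h]; exact (H (u, Fin.tail t)).source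
      · rw [h]; exact (H (u, Fin.tail t)).target
      · rw [H.eq_fst _ h, show (curryLoop n a).1 (Fin.tail t) = Path.refl x from
          (curryLoop n a).2 _ h]; rfl

lemma card_loop (n : ℕ) : Nat.card (HomotopyGroup (Fin (n + 1)) X x) =
    Nat.card (HomotopyGroup (Fin n) (Path x x) (Path.refl x)) :=
  Nat.card_congr (Quotient.congr (curryLoop n) fun _ _ => curryLoop_homotopic)

end Loop

universe u

/-- Pointed spaces. -/
structure PT : Type (u + 1) where
  /-- the carrier -/
  X : Type u
  [top : TopologicalSpace X]
  /-- the base point -/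
  pt : X

attribute [instance] PT.top

/-- The loop space. -/
def PT.loop (A : PT.{u}) : PT.{u} := ⟨Path A.pt A.pt, Path.refl _⟩

/-- Iterated loop spaces. -/
def PT.loopN : ℕ → PT.{u} → PT.{u}
  | 0, A => A
  | n + 1, A => PT.loopN n A.loop

/-- The fundamental group of a pointed space. -/
abbrev PT.G (A : PT.{u}) : Type u := FundamentalGroup A.X A.pt

lemma card_pi (n : ℕ) (A : PT.{u}) :
    Nat.card (HomotopyGroup (Fin (n + 1)) A.X A.pt) = Nat.card (A.loopN n).G := by
  induction n generalizing A with
  | zero => exact Nat.card_congr HomotopyGroup.pi1EquivFundamentalGroup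
  | succ n ih => exact (card_loop (n + 1)).trans (ih A.loop)

end HF

namespace HF

open Set

universe u v w

section LoopFib

lemma IsFib.loop {E B : Type*} [TopologicalSpace E] [TopologicalSpace B] {p : E → B} {e : E}
    {b : B} (hp : IsFib p)
    (P : Path e e → Path b b) (hP : ∀ γ s, P γ s = p (γ s)) : IsFib P := by
  classical
  intro n g h hc hg
  let pr : (Fin (n + 1) → I) × I → (Fin n → I) × I := fun q => (Fin.tail q.1, q.2)
  have hpr : Continuous pr := (continuous_tail.comp continuous_fst).prodMk continuous_snd
  have hs : Continuous (fun q : (Fin (n + 1) → I) × I => q.1 0) := by fun_prop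
  have hpe : p e = b := by
    have := hP (Path.refl e) 0
    rw [(P (Path.refl e)).source] at this
    exact this.symm
  let k : (Fin (n + 1) → I) × I → E := fun q =>
    if pr q ∈ J n then (h (pr q)) (q.1 0) else e
  have k1 : ∀ q, pr q ∈ J n → k q = (h (pr q)) (q.1 0) := fun q hq => if_pos hq
  have k2 : ∀ q, q.1 0 = 0 → k q = e := fun q hq => by
    by_cases hb : pr q ∈ J n
    · rw [k1 q hb, hq, Path.source]
    · simp only [k, if_neg hb]
  have k3 : ∀ q, q.1 0 = 1 → k q = e := fun q hq => by
    by_cases hb : pr q ∈ J n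
    · rw [k1 q hb, hq, Path.target]
    · simp only [k, if_neg hb]
  have eJ : J (n + 1) = pr ⁻¹' (J n) ∪ ({q | q.1 0 = 0} ∪ {q | q.1 0 = 1}) := by
    ext q
    simp only [J, mem_ofPred_eq, boundary_succ, pr, mem_union, mem_preimage]
    tauto
  have hk : ContinuousOn k (J (n + 1)) := by
    rw [eJ]
    refine ContinuousOn.union_of_isClosed ?_ (ContinuousOn.union_of_isClosed ?_ ?_ ?_ ?_)
      ((isClosed_J n).preimage hpr) (IsClosed.union ?_ ?_)
    · have h1 : ContinuousOn (fun q => (h (pr q))) (pr ⁻¹' (J n)) :=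
          (hc.comp hpr.continuousOn fun _ h => h)
      exact (continuous_eval.comp_continuousOn (h1.prodMk hs.continuousOn)).congr k1
    · exact (continuous_const (y := e)).continuousOn.congr k2
    · exact (continuous_const (y := e)).continuousOn.congr k3
    all_goals exact isClosed_eq hs continuous_const
  obtain ⟨K, hK1, hK2⟩ := hp (n + 1) ⟨fun q => g (pr q) (q.1 0),
    continuous_eval.comp ((g.continuous.comp hpr).prodMk hs)⟩ k hk (by
      intro q hq
      change p (k q) = g (pr q) (q.1 0)
      rw [eJ] at hq
      rcases hq with hq | hq | hq
      · rw [k1 q hq, ← hg _ hq, hP]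
      · rw [k2 q hq, show q.1 0 = 0 from hq, Path.source, hpe]
      · rw [k3 q hq, show q.1 0 = 1 from hq, Path.target, hpe])
  refine ⟨⟨fun w =>
      { toFun := fun s => K (Fin.cons s w.1, w.2)
        continuous_toFun := K.continuous.comp ((continuous_cons.comp
          (continuous_id.prodMk continuous_const)).prodMk continuous_const)
        source' := by
          rw [hK2 _ (Or.inl ((boundary_succ _).2 (Or.inl (Or.inl rfl)))), k2 _ rfl]
        target' := by
          rw [hK2 _ (Or.inl ((boundary_succ _).2 (Or.inl (Or.inr rfl)))), k3 _ rfl] },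
      Path.continuous_uncurry_iff.1 (K.continuous.comp ((continuous_cons.comp
        (continuous_snd.prodMk (continuous_fst.comp continuous_fst))).prodMk
          (continuous_snd.comp continuous_fst)))⟩, fun w => ?_, fun w hw => ?_⟩
  · ext s
    rw [hP]
    exact hK1 (Fin.cons s w.1, w.2)
  · ext s
    have hw' : pr (Fin.cons s w.1, w.2) ∈ J n := hw
    change K (Fin.cons s w.1, w.2) = h w s
    rw [hK2, k1 _ hw']
    · rfl
    · rcases hw with hw | hw
      · exact Or.inl ((boundary_succ _).2 (Or.inr hw))
      · exact Or.inr hw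

end LoopFib

/-- A pointed fibration sequence. -/
structure FibSeq (F : PT.{u}) (E : PT.{v}) (B : PT.{w}) where
  /-- inclusion of the fibre -/
  j : C(F.X, E.X)
  /-- projection -/
  p : C(E.X, B.X)
  hj : j F.pt = E.pt
  hp : p E.pt = B.pt
  emb : Topology.IsEmbedding j
  mem : ∀ e, p e = B.pt ↔ ∃ z, j z = e
  fib : IsFib p

/-- The map induced on loop spaces. -/
def loopMap {A : PT.{u}} {B : PT.{v}} (f : C(A.X, B.X)) (h : f A.pt = B.pt) :
    C(A.loop.X, B.loop.X) :=
  ⟨fun γ : Path A.pt A.pt => (γ.map f.continuous).cast h.symm h.symm,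
    Path.continuous_uncurry_iff.1 
      (f.continuous.comp (continuous_eval (F := Path A.pt A.pt)))⟩

lemma loopMap_apply {A : PT.{u}} {B : PT.{v}} (f : C(A.X, B.X)) (h : f A.pt = B.pt)
    (γ : Path A.pt A.pt) (s : I) :
    (show Path B.pt B.pt from loopMap f h γ) s = f (γ s) := rfl

lemma isInducing_loopMap {A : PT.{u}} {B : PT.{v}} (f : C(A.X, B.X)) (h : f A.pt = B.pt)
    (hf : Topology.IsInducing f) : Topology.IsInducing (loopMap f h) := by
  have h1 : Topology.IsInducing (fun γ : Path B.pt B.pt => (γ : C(I, B.X))) := ⟨rfl⟩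
  have h2 : Topology.IsInducing (fun γ : Path A.pt A.pt => (γ : C(I, A.X))) := ⟨rfl⟩
  refine h1.of_comp_iff.1 ?_
  exact (ContinuousMap.isInducing_postcomp f hf).comp h2

/-- Looping a fibration sequence. -/
def FibSeq.loop {F : PT.{u}} {E : PT.{v}} {B : PT.{w}} (s : FibSeq F E B) :
    FibSeq F.loop E.loop B.loop where
  j := loopMap s.j s.hj
  p := loopMap s.p s.hp
  hj := Path.ext (funext fun _ => s.hj)
  hp := Path.ext (funext fun _ => s.hp)
  emb := ⟨isInducing_loopMap _ _ s.emb.1, fun a b hab => Path.ext (funext fun t =>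
    s.emb.2 (congrArg (fun c : Path E.pt E.pt => c t) hab))⟩
  mem := fun γ => by
    change Path E.pt E.pt at γ
    constructor
    · intro h
      have h1 : ∀ t, ∃ z, s.j z = γ t := fun t =>
        (s.mem _).1 (congrArg (fun c : Path B.pt B.pt => c t) h)
      choose z hz using h1
      refine ⟨(⟨⟨z, s.emb.1.continuous_iff.2 ?_⟩, ?_, ?_⟩ : Path F.pt F.pt), ?_⟩
      · convert γ.continuous using 1
        exact funext hz
      · apply s.emb.2
        change s.j (z 0) = _
        rw [hz, γ.source, s.hj]
      · apply s.emb.2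
        change s.j (z 1) = _
        rw [hz, γ.target, s.hj]
      · exact Path.ext (funext hz)
    · rintro ⟨δ, rfl⟩
      exact Path.ext (funext fun t => (s.mem _).2 ⟨_, rfl⟩)
  fib := s.fib.loop _ fun _ _ => rfl

end HF

namespace HF

open Set

universe u v w

section Push

variable {E B : Type*} [TopologicalSpace E] [TopologicalSpace B]


/-- Pushing forward homotopy classes of paths between points of a fibre. -/
def push (p : C(E, B)) {b : B} {e e' : E} (h : p e = b) (h' : p e' = b) (q : Path.Homotopic.Quotient e e') : Path.Homotopic.Quotient b b :=
  (q.map p).cast h.symm h'.symm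

lemma push_mk (p : C(E, B)) {b : B} {e e' : E} (h : p e = b) (h' : p e' = b) (γ : Path e e') :
    push p h h' (.mk γ) = .mk ((γ.map p.continuous).cast h.symm h'.symm) := rfl

lemma push_trans (p : C(E, B)) {b : B} {e e' e'' : E} (h : p e = b) (h' : p e' = b)
    (h'' : p e'' = b) (q : Path.Homotopic.Quotient e e') (q' : Path.Homotopic.Quotient e' e'') :
    push p h h'' (q.trans q') = (push p h h' q).trans (push p h' h'' q') := by
  induction q using Path.Homotopic.Quotient.ind with | mk γ =>
  induction q' using Path.Homotopic.Quotient.ind with | mk γ' =>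
  rw [← Path.Homotopic.Quotient.mk_trans, push_mk, push_mk, push_mk,
    ← Path.Homotopic.Quotient.mk_trans]
  congr 1
  rw [Path.map_trans, Path.cast_trans]

lemma push_symm (p : C(E, B)) {b : B} {e e' : E} (h : p e = b) (h' : p e' = b)
    (q : Path.Homotopic.Quotient e e') :
    push p h' h q.symm = (push p h h' q).symm := by
  induction q using Path.Homotopic.Quotient.ind with | mk γ =>
  rfl

lemma IsFib.lift1 {p : E → B} (hp : IsFib p) (e : E) (γ : C(I, B)) (h : p e = γ 0) :
    ∃ δ : C(I, E), (∀ t, p (δ t) = γ t) ∧ δ 0 = e := by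
  obtain ⟨H, h1, h2⟩ := hp 0 ⟨fun q => γ q.2, by fun_prop⟩ (fun _ => e) continuousOn_const (by
    rintro q (⟨i, _⟩ | hq)
    · exact i.elim0
    · change p e = γ q.2
      rw [hq, h])
  exact ⟨⟨fun t => H (Fin.elim0, t), by fun_prop⟩, fun t => h1 _, h2 _ (Or.inr rfl)⟩

lemma IsFib.lift2 {p : E → B} (hp : IsFib p) (g : C(I × I, B)) {e e' : E} (δ : Path e e')
    (h0 : ∀ t, p e = g (0, t)) (h1 : ∀ t, p e' = g (1, t)) (hb : ∀ s, p (δ s) = g (s, 0)) :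
    ∃ H : C(I × I, E), (∀ q, p (H q) = g q) ∧ (∀ s, H (s, 0) = δ s) ∧ (∀ t, H (0, t) = e) ∧
      ∀ t, H (1, t) = e' := by
  classical
  have hs : Continuous (fun q : (Fin 1 → I) × I => q.1 0) := by fun_prop
  have e1 : J 1 = ({q | q.1 0 = 0} ∪ {q | q.1 0 = 1}) ∪ {q | q.2 = 0} := by
    ext q; simp [J, Cube.boundary]
  let k : (Fin 1 → I) × I → E := fun q => δ (q.1 0)
  obtain ⟨H, h1, h2⟩ := hp 1 ⟨fun q => g (q.1 0, q.2), by fun_prop⟩ k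
    (by fun_prop) (by
      intro q hq
      change p (δ (q.1 0)) = g (q.1 0, q.2)
      rw [e1] at hq
      rcases hq with (hq | hq) | hq
      · rw [show q.1 0 = 0 from hq, δ.source, ← h0]
      · rw [show q.1 0 = 1 from hq, δ.target, ← h1]
      · rw [show q.2 = 0 from hq, hb])
  refine ⟨⟨fun q => H (fun _ => q.1, q.2), by fun_prop⟩, fun q => h1 _, fun s => ?_, fun t => ?_,
    fun t => ?_⟩
  · exact h2 _ (Or.inr rfl)
  · exact (h2 _ (Or.inl ⟨0, Or.inl rfl⟩)).trans δ.source
  · exact (h2 _ (Or.inl ⟨0, Or.inr rfl⟩)).trans δ.target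

end Push

section Exact


variable {F : PT.{u}} {E : PT.{v}} {B : PT.{w}} (s : FibSeq F E B)

lemma FibSeq.hjz (z : F.X) : s.p (s.j z) = B.pt := (s.mem _).2 ⟨z, rfl⟩

/-- The map on fundamental groups induced by the projection. -/
noncomputable def FibSeq.phi : E.G →* B.G := FundamentalGroup.mapOfEq s.p s.hp

/-- The map on fundamental groups induced by the inclusion. -/
noncomputable def FibSeq.jm : F.G →* E.G := FundamentalGroup.mapOfEq s.j s.hj

lemma FibSeq.phi_apply (a : Path.Homotopic.Quotient E.pt E.pt) : s.phi a = push s.p s.hp s.hp a :=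
  FundamentalGroup.mapOfEq_apply ..

lemma FibSeq.jm_apply (a : Path.Homotopic.Quotient F.pt F.pt) : s.jm a = push s.j s.hj s.hj a :=
  FundamentalGroup.mapOfEq_apply ..

lemma FibSeq.push_map (z z' : F.X) (q : Path.Homotopic.Quotient z z') :
    push s.p (s.hjz z) (s.hjz z') (q.map s.j) = .refl _ := by
  induction q using Path.Homotopic.Quotient.ind with | mk γ =>
  change Path.Homotopic.Quotient.mk _ = Path.Homotopic.Quotient.mk _
  congr 1
  ext t
  exact s.hjz _

lemma FibSeq.exact {z z' : F.X} (q : Path.Homotopic.Quotient (s.j z) (s.j z'))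
    (hq : push s.p (s.hjz z) (s.hjz z') q = .refl _) : ∃ q' : Path.Homotopic.Quotient z z', q'.map s.j = q := by
  induction q using Path.Homotopic.Quotient.ind with | mk γ =>
  rw [push_mk] at hq
  obtain ⟨G⟩ := Path.Homotopic.Quotient.exact hq
  obtain ⟨H, h1, h2, h3, h4⟩ := s.fib.lift2 ⟨fun q => G (q.2, q.1), by fun_prop⟩ γ
    (fun t => by
      change _ = G (t, 0)
      rw [G.source, s.hjz]) (fun t => by
      change _ = G (t, 1)
      rw [G.target, s.hjz]) (fun t => (G.apply_zero t).symm)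
  have h5 : ∀ t, ∃ z, s.j z = H (t, 1) := fun t => (s.mem _).1 ((h1 _).trans (G.apply_one t))
  choose w hw using h5
  refine ⟨.mk ⟨⟨w, s.emb.1.continuous_iff.2 ?_⟩, ?_, ?_⟩, ?_⟩
  · have : s.j ∘ w = fun t => H (t, 1) := funext hw
    rw [this]
    fun_prop
  · exact s.emb.2 ((hw 0).trans (h3 1))
  · exact s.emb.2 ((hw 1).trans (h4 1))
  · rw [← Path.Homotopic.Quotient.mk_map, Path.Homotopic.Quotient.eq]
    refine Path.Homotopic.symm ⟨⟨⟨⟨fun q => H (q.2, q.1), by fun_prop⟩, fun t => h2 t,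
      fun t => (hw t).symm⟩, ?_⟩⟩
    rintro t x (rfl | rfl)
    · exact (h3 t).trans γ.source.symm
    · exact (h4 t).trans γ.target.symm

/-- The relation between loops in the base and points of the fibre. -/
def FibSeq.R (b : Path.Homotopic.Quotient B.pt B.pt) (z : F.X) : Prop :=
  ∃ γ : Path.Homotopic.Quotient E.pt (s.j z), push s.p s.hp (s.hjz z) γ = b

lemma FibSeq.exists_R (b : Path.Homotopic.Quotient B.pt B.pt) : ∃ z, s.R b z := by
  induction b using Path.Homotopic.Quotient.ind with | mk β =>
  obtain ⟨δ, h1, h2⟩ := s.fib.lift1 E.pt β.toContinuousMap (s.hp.trans β.source.symm)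
  obtain ⟨z, hz⟩ := (s.mem _).1 ((h1 1).trans β.target)
  refine ⟨z, .mk ⟨δ, h2, hz.symm⟩, ?_⟩
  rw [push_mk]
  congr 1
  ext t
  exact h1 t

lemma FibSeq.R_iff {b b' : B.G} {z z' : F.X} (h : s.R b z) (h' : s.R b' z') :
    Joined z z' ↔ b'⁻¹ * b ∈ s.phi.range := by
  obtain ⟨γ, rfl⟩ := h
  obtain ⟨γ', rfl⟩ := h'
  constructor
  · rintro ⟨ε⟩
    refine ⟨(γ.trans ((Path.Homotopic.Quotient.mk ε).map s.j)).trans γ'.symm, ?_⟩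
    rw [s.phi_apply, push_trans _ _ (s.hjz z'), push_trans _ _ (s.hjz z), s.push_map,
      Path.Homotopic.Quotient.trans_refl, push_symm]
    rfl
  · rintro ⟨a, ha⟩
    rw [s.phi_apply] at ha
    obtain ⟨q', -⟩ := s.exact (γ.symm.trans (Path.Homotopic.Quotient.trans a γ')) (by
      rw [push_trans _ _ s.hp, push_trans _ _ s.hp, ha, push_symm]
      have key : ∀ x y : B.G, (y * (y⁻¹ * x)) * x⁻¹ = 1 := fun x y => by group
      exact key _ _)
    exact ⟨Quotient.out q'⟩

/-- The components of the fibre lying over the base component of the total space. -/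
def FibSeq.S0 : Set (ZerothHomotopy F.X) := {z | pi0Map s.j.continuous z = toPi0 E.pt}

lemma toPi0_eq {X : Type*} [TopologicalSpace X] {x y : X} : toPi0 x = toPi0 y ↔ Joined x y :=
  ⟨fun h => Quotient.exact h, fun h => Quotient.sound h⟩

lemma FibSeq.mem_S0 (z : F.X) : toPi0 z ∈ s.S0 ↔ Joined (s.j z) E.pt :=
  toPi0_eq (x := s.j z)

lemma FibSeq.card_S0 : Nat.card s.S0 * Nat.card s.phi.range = Nat.card B.G := by
  choose ζ hζ using s.exists_R
  have hS : ∀ b, toPi0 (ζ b) ∈ s.S0 := fun b => (s.mem_S0 _).2 (by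
    obtain ⟨γ, _⟩ := hζ b
    exact Joined.symm ⟨Quotient.out γ⟩)
  let Ψ : B.G ⧸ s.phi.range → s.S0 := Quotient.lift (fun b : B.G => ⟨toPi0 (ζ b), hS b⟩) (by
    intro a b hab
    have hab' := QuotientGroup.leftRel_apply.1 hab
    exact Subtype.ext (toPi0_eq.2 ((s.R_iff (hζ b) (hζ a)).2 hab').symm))
  have hΨ : Function.Bijective Ψ := by
    constructor
    · intro a b
      refine Quotient.inductionOn₂ a b fun a b hab => ?_
      apply Quotient.sound
      apply QuotientGroup.leftRel_apply.2
      have : Joined (ζ a) (ζ b) := toPi0_eq.1 (congrArg Subtype.val hab)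
      exact (s.R_iff (hζ b) (hζ a)).1 this.symm
    · rintro ⟨z, hz⟩
      obtain ⟨z, rfl⟩ : ∃ w, toPi0 w = z := Quotient.exists_rep z
      obtain ⟨γ⟩ := ((s.mem_S0 _).1 hz).symm
      refine ⟨Quotient.mk _ (push s.p s.hp (s.hjz z) (.mk γ) : B.G), Subtype.ext ?_⟩
      refine toPi0_eq.2 ((s.R_iff (hζ _) ⟨.mk γ, rfl⟩).2 ?_)
      rw [inv_mul_cancel]
      exact one_mem _
  rw [← Nat.card_congr (Equiv.ofBijective Ψ hΨ), mul_comm]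
  exact Subgroup.card_mul_index s.phi.range

lemma homotopic_iff_joined {X : Type*} [TopologicalSpace X] {x : X} (γ γ' : Path x x) :
    Path.Homotopic γ γ' ↔ Joined γ γ' := by
  constructor
  · rintro ⟨H⟩
    exact ⟨⟨⟨fun t => H.eval t, Path.continuous_uncurry_iff.1 H.continuous⟩, H.eval_zero,
      H.eval_one⟩⟩
  · rintro ⟨H⟩
    refine ⟨⟨⟨⟨fun q => H q.1 q.2, continuous_eval.comp
      ((H.continuous.comp continuous_fst).prodMk continuous_snd)⟩, fun t => ?_, fun t => ?_⟩, ?_⟩⟩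
    · exact congrArg (fun c : Path x x => c t) H.source
    · exact congrArg (fun c : Path x x => c t) H.target
    · rintro t y (rfl | rfl)
      · exact (H t).source.trans γ.source.symm
      · exact (H t).target.trans γ.target.symm

lemma FibSeq.card_ker : Nat.card s.jm.ker = Nat.card s.loop.S0 := by
  let e : F.G ≃ ZerothHomotopy F.loop.X :=
    Quotient.congrRight (r := Path.Homotopic.setoid F.pt F.pt) (r' := pathSetoid (Path F.pt F.pt))
      fun γ γ' => homotopic_iff_joined γ γ'
  refine Nat.card_congr (e.subtypeEquiv fun a => ?_)
  induction a using Path.Homotopic.Quotient.ind with | mk γ =>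
  change _ ↔ toPi0 (X := F.loop.X) γ ∈ s.loop.S0
  refine Iff.trans ?_ (s.loop.mem_S0 γ).symm
  refine Iff.trans ?_ (homotopic_iff_joined ((γ.map s.j.continuous).cast s.hj.symm s.hj.symm)
    (Path.refl E.pt))
  rw [MonoidHom.mem_ker, s.jm_apply, push_mk]
  exact Path.Homotopic.Quotient.eq

lemma FibSeq.range_jm : s.jm.range = s.phi.ker := by
  ext a
  rw [MonoidHom.mem_ker, s.phi_apply]
  constructor
  · rintro ⟨q, rfl⟩
    rw [s.jm_apply]
    induction q using Path.Homotopic.Quotient.ind with | mk γ =>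
    change Path.Homotopic.Quotient.mk _ = Path.Homotopic.Quotient.mk _
    congr 1
    ext t
    exact s.hjz _
  · intro h
    induction a using Path.Homotopic.Quotient.ind with | mk γ =>
    obtain ⟨q', hq'⟩ := s.exact (z := F.pt) (z' := F.pt) (.mk (γ.cast s.hj s.hj)) h
    refine ⟨q', ?_⟩
    rw [s.jm_apply, push, hq']
    rfl

lemma FibSeq.card_rel : Nat.card F.G * (Nat.card s.phi.range * Nat.card s.loop.phi.range) =
    Nat.card E.G * Nat.card B.loop.G := by
  have h1 := Subgroup.card_mul_index s.jm.ker
  rw [Subgroup.index_ker, s.range_jm, s.card_ker] at h1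
  have h2 := Subgroup.card_mul_index s.phi.ker
  rw [Subgroup.index_ker] at h2
  rw [← h1, ← h2, ← s.loop.card_S0]
  ring

end Exact

end HF

namespace HF

open Set

universe u v w

/-- The exponent in the definition of `mu`. -/
def eps (n : ℕ) : ℤ := (-1 : ℤ) ^ (n + 1)

lemma eps_succ (n : ℕ) : eps (n + 1) = - eps n := by
  simp [eps, pow_succ]

lemma finprod_range (a : ℕ → ℕ) (N : ℕ) (h : ∀ n, N ≤ n → a n = 1) :
    ∏ᶠ n : ℕ, (a n : ℚ) ^ eps n = ∏ n ∈ Finset.range N, (a n : ℚ) ^ eps n := by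
  apply finprod_eq_prod_of_mulSupport_subset
  intro n hn
  by_contra hc
  apply hn
  have : N ≤ n := by simpa using hc
  simp [h n this]

lemma numbers (a b c r : ℕ → ℕ) (ha : ∀ n, a n ≠ 0) (hb : ∀ n, b n ≠ 0)
    (ha1 : ∃ N, ∀ n, N ≤ n → a n = 1) (hb1 : ∃ N, ∀ n, N ≤ n → b n = 1)
    (hr : ∀ n, r n ∣ b n) (hc : ∀ n, c n * (r n * r (n + 1)) = a n * b (n + 1)) :
    ∏ᶠ n : ℕ, (c n : ℚ) ^ eps n =
      (∏ᶠ n : ℕ, (a n : ℚ) ^ eps n) * (∏ᶠ n : ℕ, (b n : ℚ) ^ eps n)⁻¹ * (r 0 / b 0) := by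
  obtain ⟨N₁, h₁⟩ := ha1
  obtain ⟨N₂, h₂⟩ := hb1
  have hr0 : ∀ n, r n ≠ 0 := fun n h => hb n (Nat.eq_zero_of_zero_dvd (h ▸ hr n))
  have hc0 : ∀ n, c n ≠ 0 := fun n h => by
    have := hc n
    rw [h, zero_mul] at this
    exact mul_ne_zero (ha n) (hb _) this.symm
  let N := N₁ + N₂
  have a1 : ∀ n, N ≤ n → a n = 1 := fun n hn => h₁ n (by omega)
  have b1 : ∀ n, N ≤ n → b n = 1 := fun n hn => h₂ n (by omega)
  have r1 : ∀ n, N ≤ n → r n = 1 := fun n hn => Nat.dvd_one.1 (b1 n hn ▸ hr n)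
  have c1 : ∀ n, N ≤ n → c n = 1 := fun n hn => by
    have := hc n
    rwa [r1 n hn, r1 (n + 1) (by omega), a1 n hn, b1 (n + 1) (by omega), mul_one, mul_one] at this
  have key : ∀ M, ∏ n ∈ Finset.range M, (c n : ℚ) ^ eps n =
      (∏ n ∈ Finset.range M, (a n : ℚ) ^ eps n) *
        (∏ n ∈ Finset.range (M + 1), (b n : ℚ) ^ eps n)⁻¹ * (r 0 / b 0) * (r M : ℚ) ^ eps M := by
    intro M
    have rq : ∀ n, (r n : ℚ) ≠ 0 := fun n => Nat.cast_ne_zero.2 (hr0 n)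
    have bq : ∀ n, (b n : ℚ) ≠ 0 := fun n => Nat.cast_ne_zero.2 (hb n)
    induction M with
    | zero =>
      have := rq 0
      have := bq 0
      simp [eps]
      field_simp
    | succ M ih =>
      rw [Finset.prod_range_succ, ih, Finset.prod_range_succ (fun n => (a n : ℚ) ^ eps n),
        Finset.prod_range_succ (fun n => (b n : ℚ) ^ eps n) (M + 1), eps_succ]
      have h3 : (c M : ℚ) = a M * b (M + 1) / (r M * r (M + 1)) := by
        rw [eq_div_iff (mul_ne_zero (rq _) (rq _))]
        exact_mod_cast hc M
      rw [h3, div_zpow, mul_zpow, mul_zpow, mul_inv, zpow_neg, zpow_neg, inv_inv]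
      have := zpow_ne_zero (eps M) (rq M)
      have := zpow_ne_zero (eps M) (rq (M + 1))
      field_simp
  rw [finprod_range c N c1, finprod_range a N a1, finprod_range b (N + 1)
    (fun n hn => b1 n (by omega)), key N, r1 N le_rfl]
  simp

/-- The orders of the images of the maps on the homotopy groups. -/
noncomputable def FibSeq.r : ∀ (_ : ℕ) {F : PT.{u}} {E : PT.{v}} {B : PT.{w}} (_ : FibSeq F E B), ℕ
  | 0, _, _, _, s => Nat.card s.phi.range
  | n + 1, _, _, _, s => FibSeq.r n s.loop

lemma FibSeq.r_dvd (n : ℕ) {F : PT.{u}} {E : PT.{v}} {B : PT.{w}} (s : FibSeq F E B) :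
    s.r n ∣ Nat.card (B.loopN n).G := by
  induction n generalizing F E B with
  | zero => exact ⟨_, (s.card_S0.symm.trans (mul_comm _ _))⟩
  | succ n ih => exact ih s.loop

lemma FibSeq.r_rel (n : ℕ) {F : PT.{u}} {E : PT.{v}} {B : PT.{w}} (s : FibSeq F E B) :
    Nat.card (F.loopN n).G * (s.r n * s.r (n + 1)) =
      Nat.card (E.loopN n).G * Nat.card (B.loopN (n + 1)).G := by
  induction n generalizing F E B with
  | zero => exact s.card_rel
  | succ n ih => exact ih s.loop

lemma mu_eq (A : PT.{u}) : mu A.X A.pt = ∏ᶠ n : ℕ, (Nat.card (A.loopN n).G : ℚ) ^ eps n :=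
  finprod_congr fun n => by rw [card_pi]; rfl

/-- The numerical consequence of local finiteness at a point. -/
def NF {X : Type*} [TopologicalSpace X] (x : X) : Prop :=
  (∀ n : ℕ, Nat.card (HomotopyGroup (Fin (n + 1)) X x) ≠ 0) ∧
    ∃ N, ∀ n : ℕ, N ≤ n → Nat.card (HomotopyGroup (Fin (n + 1)) X x) = 1

lemma nf_of {X : Type*} [TopologicalSpace X] (h : IsLocallyFinite X) (x : X) : NF x := by
  refine ⟨fun n => ?_, ?_⟩
  · have := (h x).1 (n + 1) (by omega)
    exact Nat.card_ne_zero.2 ⟨⟨Quotient.mk _ GenLoop.const⟩, this⟩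
  · obtain ⟨N, hN⟩ := (h x).2
    refine ⟨N, fun n hn => ?_⟩
    have := hN (n + 1) (by omega)
    exact Nat.card_eq_one_iff_unique.2 ⟨this, ⟨Quotient.mk _ GenLoop.const⟩⟩

lemma FibSeq.mu_eq {F : PT.{u}} {E : PT.{v}} {B : PT.{w}} (s : FibSeq F E B)
    (hE : NF E.pt) (hB : NF B.pt) :
    Nat.card s.S0 ≠ 0 ∧
      mu F.X F.pt = mu E.X E.pt * (mu B.X B.pt)⁻¹ * (1 / Nat.card s.S0) := by
  simp only [NF, card_pi] at hE hB
  have h0 := s.card_S0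
  have hb0 : Nat.card B.G ≠ 0 := hB.1 0
  rw [← h0] at hb0
  have hS := left_ne_zero_of_mul hb0
  have hR := right_ne_zero_of_mul hb0
  refine ⟨hS, ?_⟩
  rw [HF.mu_eq, HF.mu_eq, HF.mu_eq, numbers _ _ _ (fun n => s.r n) hE.1 hB.1 hE.2 hB.2
    (fun n => s.r_dvd n) (fun n => s.r_rel n)]
  congr 1
  change (Nat.card s.phi.range : ℚ) / (Nat.card B.G : ℚ) = _
  rw [← h0]
  have hS' : (Nat.card s.S0 : ℚ) ≠ 0 := Nat.cast_ne_zero.2 hS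
  have hR' : (Nat.card s.phi.range : ℚ) ≠ 0 := Nat.cast_ne_zero.2 hR
  push_cast
  field_simp

section Final

variable {X : Type u} {Y : Type v} [TopologicalSpace X] [TopologicalSpace Y] {f : X → Y}

/-- Inclusion of the homotopy fibre in the mapping path space. -/
def inclE (f : X → Y) (y : Y) (z : HomotopyFiber f y) : PathSp f := ⟨z.1, z.2.1⟩

/-- The fibration sequence of the homotopy fibre. -/
def fibSeq (hf : Continuous f) (y : Y) (z : HomotopyFiber f y) :
    FibSeq ⟨HomotopyFiber f y, z⟩ ⟨PathSp f, inclE f y z⟩ ⟨Y, y⟩ where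
  j := ⟨inclE f y, continuous_subtype_val.subtype_mk _⟩
  p := ⟨fun e => e.1.2 1,
    (continuous_eval_const (1 : I)).comp (continuous_snd.comp continuous_subtype_val)⟩
  hj := rfl
  hp := z.2.2
  emb := ⟨Topology.IsInducing.subtypeVal.of_comp_iff.1 Topology.IsInducing.subtypeVal,
    fun a b h => Subtype.ext (congrArg (fun e : PathSp f => e.1) h)⟩
  mem := fun e => ⟨fun h => ⟨⟨e.1, e.2, h⟩, rfl⟩, by
    rintro ⟨z, rfl⟩
    exact z.2.2⟩
  fib := isFib_ev hf

lemma fibSeq_S0 (hf : Continuous f) (y : Y) (z : HomotopyFiber f y) (x : X)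
    (hz : Joined (fiberIncl f y z) x) :
    (fibSeq hf y z).S0 = {z : ZerothHomotopy (HomotopyFiber f y) |
        pi0Map (continuous_fiberIncl f y) z = toPi0 x} := by
  ext w
  obtain ⟨w, rfl⟩ : ∃ w', toPi0 w' = w := Quotient.exists_rep w
  refine ((fibSeq hf y z).mem_S0 w).trans (Iff.trans ?_ (toPi0_eq (x := fiberIncl f y w)).symm)
  constructor
  · rintro ⟨γ⟩
    exact Joined.trans ⟨γ.map (f := fun e : PathSp f => e.1.1)
      (continuous_fst.comp continuous_subtype_val)⟩ hz
  · intro h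
    exact (isTriv_fst hf).joined (h.trans hz.symm)

lemma main (hX : IsLocallyFinite X) (hY : IsLocallyFinite Y) (hf : Continuous f) (y : Y) (x : X)
    (z : HomotopyFiber f y) (hz : Joined (fiberIncl f y z) x) (S : Set _)
    (hS : S = {z : ZerothHomotopy (HomotopyFiber f y) |
        pi0Map (continuous_fiberIncl f y) z = toPi0 x}) :
    Nat.card S ≠ 0 ∧ mu (HomotopyFiber f y) z = mu X x * (mu Y y)⁻¹ * (1 / Nat.card S) := by
  have h1 : ∀ n, Nat.card (HomotopyGroup (Fin n) (PathSp f) (inclE f y z)) =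
      Nat.card (HomotopyGroup (Fin n) X x) := fun n =>
    ((isTriv_fst hf).card_eq (continuous_fst.comp continuous_subtype_val) n (inclE f y z)).trans
      (card_eq_of_joined hz n)
  have h2 : NF (inclE f y z) := by
    have := nf_of hX x
    simp only [NF] at this ⊢
    simpa only [h1] using this
  have h3 : mu (PathSp f) (inclE f y z) = mu X x := by
    simp only [mu, h1]
  have h4 := (fibSeq hf y z).mu_eq h2 (nf_of hY y)
  rw [fibSeq_S0 hf y z x hz, ← hS, h3] at h4
  exact h4

end Final

end HF

theorem statement1 {X Y : Type*} [TopologicalSpace X] [TopologicalSpace Y]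
    (hX : IsLocallyFinite X) (hY : IsLocallyFinite Y)
    {f : X → Y} (hf : Continuous f) (y : Y) (x : X)
    (hxy : Joined (f x) y)
    -- an arbitrary choice of representative points for the components of the homotopy fiber
    (rep : ZerothHomotopy (HomotopyFiber f y) → HomotopyFiber f y)
    (hrep : ∀ z, toPi0 (rep z) = z) :
    {z : ZerothHomotopy (HomotopyFiber f y) |
        pi0Map (continuous_fiberIncl f y) z = toPi0 x}.Finite ∧
    ∑ᶠ z ∈ {z : ZerothHomotopy (HomotopyFiber f y) |
        pi0Map (continuous_fiberIncl f y) z = toPi0 x},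
        mu (HomotopyFiber f y) (rep z) = mu X x * (mu Y y)⁻¹ := by
  have hS0 : ∀ z ∈ {z : ZerothHomotopy (HomotopyFiber f y) |
      pi0Map (continuous_fiberIncl f y) z = toPi0 x}, Joined (fiberIncl f y (rep z)) x := by
    intro z hz
    have hz' : pi0Map (continuous_fiberIncl f y) z = toPi0 x := hz
    rw [← hrep z] at hz'
    exact HF.toPi0_eq.1 hz'
  generalize hS : {z : ZerothHomotopy (HomotopyFiber f y) |
      pi0Map (continuous_fiberIncl f y) z = toPi0 x} = S at hS0 ⊢
  have hmain := fun z hz => HF.main hX hY hf y x (rep z) (hS0 z hz) S hS.symm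
  obtain ⟨γ⟩ := hxy
  have hne : toPi0 (⟨(x, γ.toContinuousMap), γ.source, γ.target⟩ : HomotopyFiber f y) ∈ S := by
    rw [← hS]
    rfl
  have hcard := (hmain _ hne).1
  have hfin : S.Finite := Nat.finite_of_card_ne_zero hcard
  refine ⟨hfin, ?_⟩
  rw [finsum_mem_congr rfl fun z hz => (hmain z hz).2, finsum_mem_eq_finite_toFinset_sum _ hfin,
    Finset.sum_const, nsmul_eq_mul, ← Set.ncard_eq_toFinset_card S hfin,
    ← Nat.card_coe_set_eq]
  have : (Nat.card S : ℚ) ≠ 0 := Nat.cast_ne_zero.2 hcard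
  field_simp
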